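/- arXiv:2103.07934 — 3 statements merged into one kernel-verified Lean document; each statement's English description precedes it below -/
import Mathlib

section
/- For every n ≥ 1 and every Boolean function f : {0,1}^n → {0,1}, the acceptance probability of the BLR linearity test satisfies |{(x,y) ∈ {0,1}^n × {0,1}^n : f(x) ⊕ f(y) = f(x ⊕ y)}| / 4^n = 1/2 + (1/2) · Σ_{a ∈ {0,1}^n} f̂(a)³, and this quantity is at most 1/2 + (1/2) · max_{a ∈ {0,1}^n} f̂(a). -/
open Finset Real Classical

noncomputable def walsh (n : ℕ) (f : (Fin n → ZMod 2) → ZMod 2) (a : Fin n → ZMod 2) : ℝ :=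
  (2 ^ n : ℝ)⁻¹ * ∑ x : Fin n → ZMod 2, (-1 : ℝ) ^ ((f x + ∑ i, a i * x i).val)

def hamDist (n : ℕ) (f g : (Fin n → ZMod 2) → ZMod 2) : ℕ :=
  (Finset.univ.filter fun x => f x ≠ g x).card

def chi (n : ℕ) (a : Fin n → ZMod 2) (b : ZMod 2) : (Fin n → ZMod 2) → ZMod 2 :=
  fun x => (∑ i, a i * x i) + b

noncomputable def nonlinearity (n : ℕ) (f : (Fin n → ZMod 2) → ZMod 2) : ℝ :=
  Finset.univ.inf' ⟨((fun _ => 0), 0), Finset.mem_univ _⟩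
    (fun p : (Fin n → ZMod 2) × ZMod 2 => (hamDist n f (chi n p.1 p.2) : ℝ) / 2 ^ n)

def wt (n : ℕ) (f : (Fin n → ZMod 2) → ZMod 2) : ℕ :=
  (Finset.univ.filter fun x => f x = 1).card

noncomputable def PWC (s t : ℕ) (f : (Fin (s + t) → ZMod 2) → ZMod 2)
    (p : Fin s → ZMod 2) : ℝ :=
  ∑ x : Fin t → ZMod 2, walsh (s + t) f (Fin.append p x) ^ 2

/-- The sign character of `ZMod 2`. -/
noncomputable def sgn (c : ZMod 2) : ℝ := (-1 : ℝ) ^ c.val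

lemma sgn_zero : sgn 0 = 1 := by simp [sgn]

lemma sgn_one : sgn 1 = -1 := by simp [sgn, ZMod.val_one]

lemma zmod2_cases (a : ZMod 2) : a = 0 ∨ a = 1 := by
  revert a; decide

lemma sgn_add (a b : ZMod 2) : sgn (a + b) = sgn a * sgn b := by
  have h : (1 : ZMod 2) + 1 = 0 := by decide
  rcases zmod2_cases a with rfl | rfl <;> rcases zmod2_cases b with rfl | rfl <;>
    simp [sgn_zero, sgn_one, h]

lemma sgn_mul_self (a : ZMod 2) : sgn a * sgn a = 1 := by
  rcases zmod2_cases a with rfl | rfl <;> simp [sgn_zero, sgn_one]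

lemma sgn_sum {ι : Type*} (s : Finset ι) (g : ι → ZMod 2) :
    sgn (∑ i ∈ s, g i) = ∏ i ∈ s, sgn (g i) := by
  induction s using Finset.cons_induction with
  | empty => simp [sgn_zero]
  | cons a s ha ih => rw [Finset.sum_cons, Finset.prod_cons, sgn_add, ih]

lemma sum_zmod2 (g : ZMod 2 → ℝ) : ∑ c, g c = g 0 + g 1 := Fin.sum_univ_two g

lemma sgn_orth (n : ℕ) (z : Fin n → ZMod 2) :
    ∑ a : Fin n → ZMod 2, sgn (∑ i, a i * z i) = if z = 0 then (2 : ℝ) ^ n else 0 := by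
  simp only [sgn_sum]
  have h := Fintype.prod_sum (fun (i : Fin n) (c : ZMod 2) => sgn (c * z i))
  rw [← h]
  split_ifs with hz
  · subst hz
    simp [sgn_zero]
  · obtain ⟨i, hi⟩ := Function.ne_iff.mp hz
    apply Finset.prod_eq_zero (Finset.mem_univ i)
    have hi : z i = 1 := (zmod2_cases (z i)).resolve_left hi
    rw [sum_zmod2, hi]
    simp [sgn_zero, sgn_one]

lemma walsh_eq (n : ℕ) (f : (Fin n → ZMod 2) → ZMod 2) (a : Fin n → ZMod 2) :
    walsh n f a = (2 ^ n : ℝ)⁻¹ * ∑ x, sgn (f x) * sgn (∑ i, a i * x i) := by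
  unfold walsh
  congr 1
  exact Finset.sum_congr rfl fun x _ => sgn_add _ _

lemma sgn_dot_add (n : ℕ) (a x y : Fin n → ZMod 2) :
    sgn (∑ i, a i * (x + y) i) = sgn (∑ i, a i * x i) * sgn (∑ i, a i * y i) := by
  rw [← sgn_add, ← Finset.sum_add_distrib]
  simp only [Pi.add_apply, mul_add]

lemma add_eq_zero_vec (n : ℕ) (x y : Fin n → ZMod 2) : x + y = 0 ↔ y = x := by
  have h : ∀ a b : ZMod 2, a + b = 0 ↔ b = a := by decide
  simp only [funext_iff, Pi.add_apply, Pi.zero_apply, h]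

lemma parseval (n : ℕ) (f : (Fin n → ZMod 2) → ZMod 2) :
    ∑ a, walsh n f a ^ 2 = 1 := by
  have h1 : ∀ a, walsh n f a ^ 2 = ((2 ^ n : ℝ)⁻¹) ^ 2 *
      ∑ x, ∑ y, sgn (f x) * sgn (f y) * sgn (∑ i, a i * (x + y) i) := by
    intro a
    rw [walsh_eq, mul_pow, sq (∑ x, _), Finset.sum_mul_sum]
    congr 1
    refine Finset.sum_congr rfl fun x _ => Finset.sum_congr rfl fun y _ => ?_
    rw [sgn_dot_add]; ring
  simp only [h1]
  rw [← Finset.mul_sum, Finset.sum_comm]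
  have h2 : ∀ x : Fin n → ZMod 2, ∑ a : Fin n → ZMod 2, ∑ y,
      sgn (f x) * sgn (f y) * sgn (∑ i, a i * (x + y) i) = 2 ^ n := by
    intro x
    rw [Finset.sum_comm]
    simp only [← Finset.mul_sum, sgn_orth, add_eq_zero_vec]
    simp [sgn_mul_self]
  simp only [h2]
  simp
  field_simp

lemma cube (n : ℕ) (f : (Fin n → ZMod 2) → ZMod 2) :
    ∑ a, walsh n f a ^ 3 = ((4 : ℝ) ^ n)⁻¹ *
      ∑ x, ∑ y, sgn (f x) * sgn (f y) * sgn (f (x + y)) := by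
  have h1 : ∀ a, walsh n f a ^ 3 = ((2 ^ n : ℝ)⁻¹) ^ 3 *
      ∑ x, ∑ y, ∑ z, sgn (f x) * sgn (f y) * sgn (f z) * sgn (∑ i, a i * (x + y + z) i) := by
    intro a
    rw [walsh_eq, mul_pow, pow_succ (∑ x, _) 2, sq (∑ x, _), Finset.sum_mul_sum,
      Finset.sum_mul]
    congr 1
    refine Finset.sum_congr rfl fun x _ => ?_
    rw [Finset.sum_mul]
    refine Finset.sum_congr rfl fun y _ => ?_
    rw [Finset.mul_sum]
    refine Finset.sum_congr rfl fun z _ => ?_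
    rw [sgn_dot_add, sgn_dot_add]; ring
  simp only [h1]
  rw [← Finset.mul_sum, Finset.sum_comm]
  have h2 : ∀ x : Fin n → ZMod 2, ∑ a : Fin n → ZMod 2, ∑ y, ∑ z,
      sgn (f x) * sgn (f y) * sgn (f z) * sgn (∑ i, a i * (x + y + z) i) =
      2 ^ n * ∑ y, sgn (f x) * sgn (f y) * sgn (f (x + y)) := by
    intro x
    rw [Finset.sum_comm, Finset.mul_sum]
    refine Finset.sum_congr rfl fun y _ => ?_
    rw [Finset.sum_comm]
    simp only [← Finset.mul_sum, sgn_orth, add_eq_zero_vec]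
    simp
    ring
  simp only [h2]
  rw [← Finset.mul_sum, ← mul_assoc]
  congr 1
  have h4 : (4 : ℝ) ^ n = 2 ^ n * 2 ^ n := by rw [← mul_pow]; norm_num
  rw [h4]
  field_simp

lemma indic (a b c : ZMod 2) :
    (if a + b = c then (1 : ℝ) else 0) = 1 / 2 + 1 / 2 * (sgn a * sgn b * sgn c) := by
  have h : (1 : ZMod 2) + 1 = 0 := by decide
  rcases zmod2_cases a with rfl | rfl <;> rcases zmod2_cases b with rfl | rfl <;>
    rcases zmod2_cases c with rfl | rfl <;>
    simp only [sgn_zero, sgn_one, h, add_zero, zero_add] <;> norm_num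

lemma accept (n : ℕ) (f : (Fin n → ZMod 2) → ZMod 2) :
    ((Finset.univ.filter fun p : (Fin n → ZMod 2) × (Fin n → ZMod 2) =>
        f p.1 + f p.2 = f (p.1 + p.2)).card : ℝ) / 4 ^ n =
      1 / 2 + (1 / 2) * ∑ a : Fin n → ZMod 2, walsh n f a ^ 3 := by
  have h4 : (4 : ℝ) ^ n = 2 ^ n * 2 ^ n := by rw [← mul_pow]; norm_num
  rw [cube, Finset.card_filter]
  push_cast
  simp only [indic]
  rw [Fintype.sum_prod_type]
  simp only [Finset.sum_add_distrib, ← Finset.mul_sum]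
  simp
  rw [h4]
  field_simp

theorem stmt5 (n : ℕ) (hn : 1 ≤ n) (f : (Fin n → ZMod 2) → ZMod 2) :
    ((Finset.univ.filter fun p : (Fin n → ZMod 2) × (Fin n → ZMod 2) =>
        f p.1 + f p.2 = f (p.1 + p.2)).card : ℝ) / 4 ^ n =
      1 / 2 + (1 / 2) * ∑ a : Fin n → ZMod 2, walsh n f a ^ 3 ∧
    ((Finset.univ.filter fun p : (Fin n → ZMod 2) × (Fin n → ZMod 2) =>
        f p.1 + f p.2 = f (p.1 + p.2)).card : ℝ) / 4 ^ n ≤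
      1 / 2 + (1 / 2) *
        Finset.univ.sup' ⟨(fun _ => 0), Finset.mem_univ _⟩
          (fun a : Fin n → ZMod 2 => walsh n f a) := by
  refine ⟨accept n f, ?_⟩
  rw [accept n f]
  have key : ∑ a, walsh n f a ^ 3 ≤ Finset.univ.sup' ⟨(fun _ => 0), Finset.mem_univ _⟩
      (fun a : Fin n → ZMod 2 => walsh n f a) := by
    set M := Finset.univ.sup' ⟨(fun _ => 0), Finset.mem_univ _⟩
      (fun a : Fin n → ZMod 2 => walsh n f a) with hM
    calc ∑ a, walsh n f a ^ 3 ≤ ∑ a, M * walsh n f a ^ 2 := by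
          refine Finset.sum_le_sum fun a _ => ?_
          have : walsh n f a ≤ M :=
            Finset.le_sup' (fun a : Fin n → ZMod 2 => walsh n f a) (Finset.mem_univ a)
          rw [pow_succ' _ 2]
          exact mul_le_mul_of_nonneg_right this (sq_nonneg _)
      _ = M := by rw [← Finset.mul_sum, parseval, mul_one]
  linarith
end

section
/- Let q ≥ 1 be a natural number and let τ' be a real number with 0 ≤ τ' ≤ 1, and set τ₁ = ⌊(2^q / π) · arcsin(√τ')⌋. Then 0 ≤ τ' − sin²(π · τ₁ / 2^q) ≤ 2π / 2^q. -/
open Finset Real Classical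

theorem stmt17 (q : ℕ) (hq : 1 ≤ q) (τ' : ℝ) (h0 : 0 ≤ τ') (h1 : τ' ≤ 1)
    (τ₁ : ℕ) (hτ₁ : τ₁ = ⌊(2 ^ q / π) * Real.arcsin (Real.sqrt τ')⌋₊) :
    0 ≤ τ' - Real.sin (π * τ₁ / 2 ^ q) ^ 2 ∧
    τ' - Real.sin (π * τ₁ / 2 ^ q) ^ 2 ≤ 2 * π / 2 ^ q := by
  have hπ := Real.pi_pos
  have hN : (0:ℝ) < 2 ^ q := by positivity
  set a := Real.arcsin (Real.sqrt τ') with ha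
  have hs0 : 0 ≤ Real.sqrt τ' := Real.sqrt_nonneg _
  have hs1 : Real.sqrt τ' ≤ 1 := Real.sqrt_le_one.mpr h1
  have hsin : Real.sin a = Real.sqrt τ' := Real.sin_arcsin (by linarith) hs1
  have ha0 : 0 ≤ a := Real.arcsin_nonneg.mpr hs0
  have ha1 : a ≤ π / 2 := Real.arcsin_le_pi_div_two _
  have hτ : τ' = Real.sin a ^ 2 := by rw [hsin, Real.sq_sqrt h0]
  have hx0 : 0 ≤ (2 ^ q / π) * a := by positivity
  have hle : (τ₁ : ℝ) ≤ (2 ^ q / π) * a := by rw [hτ₁]; exact Nat.floor_le hx0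
  have hlt : (2 ^ q / π) * a < (τ₁ : ℝ) + 1 := by rw [hτ₁]; exact Nat.lt_floor_add_one _
  have e : (2 ^ q / π) * a = (2 ^ q * a) / π := by ring
  rw [e] at hle hlt
  rw [le_div_iff₀ hπ] at hle
  rw [div_lt_iff₀ hπ] at hlt
  set b := π * τ₁ / 2 ^ q with hb
  have hb0 : 0 ≤ b := by positivity
  have hba : b ≤ a := by rw [hb, div_le_iff₀ hN]; linarith
  have hab : a - b ≤ π / 2 ^ q := by
    have : a ≤ π * (τ₁ + 1) / 2 ^ q := by rw [le_div_iff₀ hN]; linarith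
    have e2 : π * ((τ₁ : ℝ) + 1) / 2 ^ q = b + π / 2 ^ q := by rw [hb]; ring
    linarith
  have hsb0 : 0 ≤ Real.sin b := Real.sin_nonneg_of_nonneg_of_le_pi hb0 (by linarith)
  have hsab : Real.sin b ≤ Real.sin a :=
    Real.sin_le_sin_of_le_of_le_pi_div_two (by linarith) ha1 hba
  have hd : Real.sin a - Real.sin b ≤ a - b := by
    rw [Real.sin_sub_sin]
    have h2 : Real.sin ((a - b) / 2) ≤ (a - b) / 2 := Real.sin_le (by linarith)
    have h3 : 0 ≤ Real.sin ((a - b) / 2) :=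
      Real.sin_nonneg_of_nonneg_of_le_pi (by linarith) (by linarith)
    nlinarith [Real.cos_le_one ((a + b) / 2)]
  have e3 : 2 * π / 2 ^ q = 2 * (π / 2 ^ q) := by ring
  rw [hτ, e3]
  constructor
  · nlinarith
  · nlinarith [Real.sin_le_one a, Real.sin_le_one b]
end

section
/- Let n ≥ 1 and let f : {0,1}^n → {0,1} be a bent function, i.e. |f̂(a)| = 2^{−n/2} for every a ∈ {0,1}^n. Then the normalised non-linearity of f equals η(f) = 1/2 − (1/2) · 2^{−n/2}. -/
open Finset Real Classical

theorem sign_aux (u v b : ZMod 2) :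
    (if u ≠ v + b then (1 : ℝ) else 0) =
      1 / 2 - 1 / 2 * ((-1 : ℝ) ^ b.val * (-1 : ℝ) ^ (u + v).val) := by
  have key : ∀ u v b : ZMod 2, (u ≠ v + b ∧ (b.val + (u + v).val) % 2 = 1) ∨
      (u = v + b ∧ (b.val + (u + v).val) % 2 = 0) := by decide
  rw [← pow_add]
  rcases key u v b with ⟨h1, h2⟩ | ⟨h1, h2⟩
  · rw [if_pos h1, (Nat.odd_iff.mpr h2).neg_one_pow]; norm_num
  · rw [if_neg (not_not.mpr h1), (Nat.even_iff.mpr h2).neg_one_pow]; norm_num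

theorem dist_eq_walsh (n : ℕ) (f : (Fin n → ZMod 2) → ZMod 2) (a : Fin n → ZMod 2) (b : ZMod 2) :
    (hamDist n f (chi n a b) : ℝ) / 2 ^ n = 1 / 2 - 1 / 2 * ((-1 : ℝ) ^ b.val * walsh n f a) := by
  have h : (hamDist n f (chi n a b) : ℝ) = ∑ x : Fin n → ZMod 2,
      (1 / 2 - 1 / 2 * ((-1 : ℝ) ^ b.val * (-1 : ℝ) ^ (f x + ∑ i, a i * x i).val)) := by
    unfold hamDist chi
    rw [Finset.card_filter]
    push_cast
    refine Finset.sum_congr rfl fun x _ => ?_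
    rw [← sign_aux]
  rw [h, Finset.sum_sub_distrib, ← Finset.mul_sum, ← Finset.mul_sum]
  unfold walsh
  simp only [Finset.sum_const, Finset.card_univ, Fintype.card_fun, ZMod.card, Fintype.card_fin,
    nsmul_eq_mul]
  push_cast
  field_simp

theorem stmt19 (n : ℕ) (hn : 1 ≤ n) (f : (Fin n → ZMod 2) → ZMod 2)
    (hbent : ∀ a : Fin n → ZMod 2, |walsh n f a| = (Real.sqrt (2 ^ n))⁻¹) :
    nonlinearity n f = 1 / 2 - (1 / 2) * (Real.sqrt (2 ^ n))⁻¹ := by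
  unfold nonlinearity
  apply le_antisymm
  · have h0 := hbent (fun _ => 0)
    rcases abs_cases (walsh n f (fun _ => 0)) with ⟨h, _⟩ | ⟨h, _⟩
    · refine (Finset.inf'_le _ (Finset.mem_univ ((fun _ => 0), (0 : ZMod 2)))).trans ?_
      rw [dist_eq_walsh, ← h0, h]
      simp
    · refine (Finset.inf'_le _ (Finset.mem_univ ((fun _ => 0), (1 : ZMod 2)))).trans ?_
      rw [dist_eq_walsh, ← h0, h]
      have : (1 : ZMod 2).val = 1 := rfl
      simp [this]
  · apply Finset.le_inf'
    rintro ⟨a, b⟩ _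
    rw [dist_eq_walsh, ← hbent a]
    have := le_abs_self ((-1 : ℝ) ^ b.val * walsh n f a)
    rw [abs_mul, abs_pow, abs_neg, abs_one, one_pow, one_mul] at this
    dsimp only
    linarith
end
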